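/- arXiv:1811.08930 — 2 statements merged into one kernel-verified Lean document; each statement's English description precedes it below -/
import Mathlib

section
/- Let p be a prime, let f_1(x), …, f_{n−1}(x), f_n(x) ∈ F_p[x] be an admissible set of n polynomials with deg f_i = m_i, write 𝓜_{n−1} = m_1 + ⋯ + m_{n−1}, and let t, A, B_1, …, B_{n−1} be positive integers with 𝔅 = B_1⋯B_{n−1}. Suppose the 𝔅·A products x^a f_1(x)^{b_1 t} ⋯ f_{n−1}(x)^{b_{n−1} t} (0 ≤ a < A, 0 ≤ b_i < B_i) are linearly independent over F_p and all have degree strictly less than p. Let Φ(x) = Σ_b H_b(x) f_1(x)^{b_1 t} ⋯ f_{n−1}(x)^{b_{n−1} t}, where the sum is over vectors b = (b_1, …, b_{n−1}) with 0 ≤ b_i < B_i and each H_b ∈ F_p[x] has deg H_b < A, and suppose Φ is not identically zero. If f_n(x)^t divides Φ(x), then t ≤ A·𝔅 + 𝓜_{n−1}·𝔅²/2 + 𝔅 − 1. -/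
open Polynomial

/-- A set of polynomials `f 0, …, f (n-1)` is admissible if there exist points
`x 0, …, x (n-1)` with `f i (x i) = 0`, `f j (x i) ≠ 0` for `j ≠ i`,
and `f i 0 ≠ 0` for all `i`. -/
def AdmissibleSet {n : ℕ} {K : Type*} [CommRing K] (f : Fin n → Polynomial K) : Prop :=
  ∃ x : Fin n → K, (∀ i, (f i).eval (x i) = 0) ∧
    (∀ i j, j ≠ i → (f j).eval (x i) ≠ 0) ∧ (∀ i, (f i).eval 0 ≠ 0)

namespace KeyDiv

/-- The logarithmic-derivative-type cofactor. -/
lemma exists_logderiv {K ι : Type*} [Field K] [DecidableEq ι] (s : Finset ι)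
    (f : ι → K[X]) (e : ι → ℕ) :
    ∃ r : K[X], r.natDegree ≤ ∑ i ∈ s, (f i).natDegree ∧
      (∏ i ∈ s, f i) * derivative (∏ i ∈ s, f i ^ e i) = r * ∏ i ∈ s, f i ^ e i := by
  induction s using Finset.induction_on with
  | empty => exact ⟨0, by simp, by simp⟩
  | insert a s ha ih =>
    obtain ⟨r, hr, h⟩ := ih
    refine ⟨C (e a : K) * derivative (f a) * ∏ i ∈ s, f i + f a * r, ?_, ?_⟩
    · rw [Finset.sum_insert ha]
      refine natDegree_add_le_of_degree_le ?_ ?_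
      · refine natDegree_mul_le_of_le ?_ (natDegree_prod_le _ _)
        refine (natDegree_C_mul_le _ _).trans ((natDegree_derivative_le _).trans (Nat.sub_le _ _))
      · exact natDegree_mul_le_of_le le_rfl hr
    · rw [Finset.prod_insert ha, Finset.prod_insert ha, derivative_mul]
      have h1 : f a * derivative (f a ^ e a) = C (e a : K) * derivative (f a) * f a ^ e a := by
        rw [derivative_pow]
        rcases Nat.eq_zero_or_pos (e a) with h0 | h0
        · simp [h0]
        · obtain ⟨k, hk⟩ := Nat.exists_eq_succ_of_ne_zero h0.ne'
          rw [hk]; simp only [Nat.succ_eq_add_one, Nat.add_sub_cancel]; ring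
      linear_combination (∏ i ∈ s, f i) * (∏ i ∈ s, f i ^ e i) * h1 + f a * f a ^ e a * h

/-- The reduced derivatives. -/
noncomputable def red {K : Type*} [Field K] (F r h : K[X]) : ℕ → K[X]
  | 0 => h
  | k + 1 => F * derivative (red F r h k) + (r - C (k : K) * derivative F) * red F r h k

lemma red_spec {K : Type*} [Field K] (F r h u : K[X]) (hu : F * derivative u = r * u) (k : ℕ) :
    F ^ k * derivative^[k] (h * u) = u * red F r h k := by
  induction k with
  | zero => simp [red, mul_comm]
  | succ k ih =>
    rw [Function.iterate_succ_apply', red]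
    have h2 := congrArg derivative ih
    rw [derivative_mul, derivative_mul] at h2
    have h1 : F * derivative (F ^ k) = C (k : K) * derivative F * F ^ k := by
      rw [derivative_pow]
      rcases k with _ | k
      · simp
      · simp only [Nat.add_sub_cancel]; ring
    linear_combination F * h2 - derivative^[k] (h * u) * h1 + red F r h k * hu
      - C (k : K) * derivative F * ih

lemma red_natDegree {K : Type*} [Field K] (F r h : K[X]) (M A : ℕ) (hF : F.natDegree ≤ M)
    (hr : r.natDegree ≤ M) (hh : h.natDegree ≤ A) (k : ℕ) :
    (red F r h k).natDegree ≤ A + k * M := by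
  induction k with
  | zero => simpa [red] using hh
  | succ k ih =>
    rw [red, show A + (k + 1) * M = M + (A + k * M) by ring]
    refine natDegree_add_le_of_degree_le ?_ ?_
    · exact natDegree_mul_le_of_le hF
        ((natDegree_derivative_le _).trans ((Nat.sub_le _ _).trans ih))
    · refine natDegree_mul_le_of_le ?_ ih
      refine (natDegree_sub_le _ _).trans (max_le hr ?_)
      exact (natDegree_C_mul_le _ _).trans ((natDegree_derivative_le _).trans
        ((Nat.sub_le _ _).trans hF))

lemma det_natDegree {K : Type*} [Field K] (s : ℕ) (Q : Matrix (Fin s) (Fin s) K[X])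
    (d : Fin s → ℕ) (hd : ∀ k j, (Q k j).natDegree ≤ d k) :
    Q.det.natDegree ≤ ∑ k, d k := by
  rw [Matrix.det_apply]
  refine natDegree_sum_le_of_forall_le _ _ fun σ _ => ?_
  have h : (∏ i, Q (σ i) i).natDegree ≤ ∑ k, d k := by
    refine (natDegree_prod_le _ _).trans ?_
    rw [← Equiv.sum_comp σ d]
    exact Finset.sum_le_sum fun i _ => hd _ _
  rcases Int.units_eq_one_or (Equiv.Perm.sign σ) with h1 | h1 <;> rw [h1]
  · simpa using h
  · simpa using h

/-- A nonzero Euler-type operator of order `< s` cannot kill `s` independent polynomials of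
degree `< p`. -/
lemma op_ne_zero (p s : ℕ) [Fact p.Prime] (g : Fin s → (ZMod p)[X])
    (hg : LinearIndependent (ZMod p) g) (hgd : ∀ j, (g j).natDegree < p)
    (e : Fin s → (ZMod p)[X])
    (he : ∀ j, ∑ k : Fin s, e k * (X ^ (k : ℕ) * derivative^[k] (g j)) = 0) : e = 0 := by
  classical
  by_contra hne
  have hp : 0 < p := (Fact.out : p.Prime).pos
  obtain ⟨k0, hk0⟩ : ∃ k, e k ≠ 0 := by
    by_contra hcon; push Not at hcon; exact hne (funext hcon)
  obtain ⟨k1, hk1m, hk1⟩ := Finset.exists_max_image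
    (Finset.univ.filter fun k => e k ≠ 0) (fun k => (e k).natDegree) ⟨k0, by simp [hk0]⟩
  set N := (e k1).natDegree with hN
  have hk1' : e k1 ≠ 0 := by simpa using hk1m
  have hle : ∀ k, (e k).natDegree ≤ N := by
    intro k
    by_cases hk : e k = 0
    · simp [hk]
    · exact hk1 k (by simp [hk])
  set V := Submodule.span (ZMod p) (Set.range g) with hV
  have hfin : Module.finrank (ZMod p) V = s := by
    rw [hV, finrank_span_eq_card hg, Fintype.card_fin]
  have : FiniteDimensional (ZMod p) V := FiniteDimensional.span_of_finite _ (Set.finite_range g)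
  have hVd : ∀ v ∈ V, v.natDegree < p := by
    intro v hv
    have : V ≤ degreeLT (ZMod p) p := by
      rw [hV, Submodule.span_le]
      rintro _ ⟨j, rfl⟩
      rw [SetLike.mem_coe, mem_degreeLT]
      exact lt_of_le_of_lt degree_le_natDegree (by exact_mod_cast hgd j)
    have h1 := mem_degreeLT.1 (this hv)
    by_cases h0 : v = 0
    · simpa [h0] using hp
    · exact (natDegree_lt_iff_degree_lt h0).2 h1
  have hVe : ∀ v ∈ V, ∑ k : Fin s, e k * (X ^ (k : ℕ) * derivative^[k] v) = 0 := by
    intro v hv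
    induction hv using Submodule.span_induction with
    | mem x hx => obtain ⟨j, rfl⟩ := hx; exact he j
    | zero => simp
    | add x y _ _ hx hy =>
      simp only [iterate_map_add, mul_add, Finset.sum_add_distrib, hx, hy, add_zero]
    | smul a x _ hx =>
      simp only [iterate_derivative_smul, mul_smul_comm, ← Finset.smul_sum, hx, smul_zero]
  set D : Finset ℕ := (Finset.range p).filter fun d => ∃ v ∈ V, v ≠ 0 ∧ v.natDegree = d with hD
  -- many degrees
  have hcard : s ≤ D.card := by
    let φ : V →ₗ[ZMod p] (D → ZMod p) :=
      LinearMap.pi fun d => (lcoeff (ZMod p) (d : ℕ)).comp V.subtype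
    have hφ : Function.Injective φ := by
      rw [injective_iff_map_eq_zero]
      rintro ⟨v, hv⟩ h0
      by_contra hvn
      have hv0 : v ≠ 0 := fun h => hvn (by simp [h])
      have hmem : v.natDegree ∈ D := by
        rw [hD, Finset.mem_filter]
        exact ⟨Finset.mem_range.2 (hVd v hv), v, hv, hv0, rfl⟩
      have := congrFun h0 ⟨_, hmem⟩
      have h2 : v.coeff v.natDegree = 0 := this
      exact hv0 (leadingCoeff_eq_zero.1 h2)
    have := LinearMap.finrank_le_finrank_of_injective hφ
    rw [hfin, Module.finrank_fintype_fun_eq_card, Fintype.card_coe] at this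
    exact this
  -- the indicial polynomial
  set P : (ZMod p)[X] := ∑ k : Fin s, C ((e k).coeff N) * descPochhammer (ZMod p) k with hP
  have hroot : ∀ d ∈ D, P.eval (d : ZMod p) = 0 := by
    intro d hd
    obtain ⟨-, v, hv, hv0, hvd⟩ := Finset.mem_filter.1 hd
    have h1 := congrArg (fun q => coeff q (N + d)) (hVe v hv)
    simp only [finsetSum_coeff, coeff_zero] at h1
    have h2 : ∀ k : Fin s, (e k * (X ^ (k : ℕ) * derivative^[k] v)).coeff (N + d)
        = v.coeff d * ((e k).coeff N * (descPochhammer (ZMod p) k).eval (d : ZMod p)) := by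
      intro k
      have hc : ∀ m, (X ^ (k : ℕ) * derivative^[k] v).coeff m
          = (m.descFactorial k : ZMod p) * v.coeff m := by
        intro m
        rw [coeff_X_pow_mul']
        split_ifs with hkm
        · rw [coeff_iterate_derivative, Nat.sub_add_cancel hkm, nsmul_eq_mul]
        · rw [Nat.descFactorial_eq_zero_iff_lt.2 (by omega)]; simp
      have hdeg : (X ^ (k : ℕ) * derivative^[k] v).natDegree ≤ d := by
        rw [natDegree_le_iff_coeff_eq_zero]
        intro m hm
        rw [hc, coeff_eq_zero_of_natDegree_lt (by omega), mul_zero]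
      rw [coeff_mul_add_eq_of_natDegree_le (hle k) hdeg, hc, descPochhammer_eval_eq_descFactorial]
      ring
    rw [Finset.sum_congr rfl fun k _ => h2 k, ← Finset.mul_sum] at h1
    have h3 : v.coeff d ≠ 0 := by
      rw [← hvd]; exact fun h => hv0 (leadingCoeff_eq_zero.1 h)
    have h4 := (mul_eq_zero.1 h1).resolve_left h3
    rw [hP, eval_finsetSum]
    simpa using h4
  have hPd : P.degree < s := by
    rw [hP]
    refine (degree_sum_le _ _).trans_lt ?_
    refine (Finset.sup_lt_iff (WithBot.bot_lt_coe s)).2 ?_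
    intro k _
    refine degree_le_natDegree.trans_lt ?_
    have h1 := natDegree_C_mul_le ((e k).coeff N) (descPochhammer (ZMod p) k)
    rw [descPochhammer_natDegree] at h1
    exact WithBot.coe_lt_coe.2 (h1.trans_lt k.2)
  have hP0 : P ≠ 0 := by
    obtain ⟨k2, hk2m, hk2⟩ := Finset.exists_max_image
      (Finset.univ.filter fun k => (e k).coeff N ≠ 0) (fun k => k) ⟨k1, by simp [hN, hk1']⟩
    have hk2' : (e k2).coeff N ≠ 0 := by simpa using hk2m
    intro h0
    have h1 := congrArg (fun q => coeff q (k2 : ℕ)) h0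
    simp only [hP, finsetSum_coeff, coeff_zero, coeff_C_mul] at h1
    rw [Finset.sum_eq_single k2] at h1
    · have hm : (descPochhammer (ZMod p) k2).coeff k2 = 1 := by
        have := (monic_descPochhammer (ZMod p) k2).coeff_natDegree
        rwa [descPochhammer_natDegree] at this
      rw [hm, mul_one] at h1
      exact hk2' h1
    · intro k _ hk
      by_cases hkz : (e k).coeff N = 0
      · simp [hkz]
      · have hlt : k < k2 := lt_of_le_of_ne (hk2 k (by simp [hkz])) hk
        rw [coeff_eq_zero_of_natDegree_lt (p := descPochhammer (ZMod p) k), mul_zero]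
        rw [descPochhammer_natDegree]; exact hlt
    · simp
  refine hP0 (eq_zero_of_degree_lt_of_eval_finset_eq_zero (D.image (fun d : ℕ => (d : ZMod p))) ?_ ?_)
  · rw [Finset.card_image_of_injOn]
    · exact hPd.trans_le (by exact_mod_cast hcard)
    · intro a ha b hb hab
      have ha' : a < p := Finset.mem_range.1 (Finset.mem_filter.1 ha).1
      have hb' : b < p := Finset.mem_range.1 (Finset.mem_filter.1 hb).1
      have := congrArg ZMod.val hab
      simpa [ZMod.val_natCast, Nat.mod_eq_of_lt ha', Nat.mod_eq_of_lt hb'] using this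
  · intro x hx
    obtain ⟨d, hd, rfl⟩ := Finset.mem_image.1 hx
    exact hroot d hd

lemma core (p s : ℕ) [Fact p.Prime] (hs : 0 < s) (F Φ : (ZMod p)[X])
    (h u r : Fin s → (ZMod p)[X]) (M A t : ℕ) (x0 : ZMod p) (hF0 : F ≠ 0)
    (hF : F.natDegree ≤ M) (hr : ∀ j, (r j).natDegree ≤ M) (hh : ∀ j, (h j).natDegree ≤ A)
    (hu : ∀ j, F * derivative (u j) = r j * u j) (hu0 : ∀ j, (u j).eval x0 ≠ 0)
    (hg : LinearIndependent (ZMod p) fun j => h j * u j)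
    (hgd : ∀ j, (h j * u j).natDegree < p)
    (hΦ : Φ = ∑ j, h j * u j) (hdvd : (X - C x0) ^ t ∣ Φ) :
    t ≤ s - 1 + ∑ k : Fin s, (A + k * M) := by
  classical
  let Q : Matrix (Fin s) (Fin s) (ZMod p)[X] := fun k j => red F (r j) (h j) k
  have hdeg : Q.det.natDegree ≤ ∑ k : Fin s, (A + k * M) :=
    det_natDegree s Q (fun k => A + k * M) fun k j => red_natDegree F (r j) (h j) M A hF (hr j) (hh j) k
  have hdet : Q.det ≠ 0 := by
    intro h0
    obtain ⟨e, he0, he⟩ := Matrix.exists_vecMul_eq_zero_iff.2 h0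
    have := op_ne_zero p s _ hg hgd (fun k => e k * F ^ (k : ℕ) * X ^ (s - (k : ℕ))) (by
      intro j
      have h1 := congrFun he j
      simp only [Matrix.vecMul, dotProduct, Pi.zero_apply] at h1
      have h2 : ∀ k : Fin s, e k * F ^ (k : ℕ) * X ^ (s - (k : ℕ)) *
          (X ^ (k : ℕ) * derivative^[k] (h j * u j)) = X ^ s * u j * (e k * Q k j) := by
        intro k
        have h3 := red_spec F (r j) (h j) (u j) (hu j) k
        have h4 : (X : (ZMod p)[X]) ^ (s - (k : ℕ)) * X ^ (k : ℕ) = X ^ s := by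
          rw [← pow_add, Nat.sub_add_cancel k.2.le]
        change _ = X ^ s * u j * (e k * red F (r j) (h j) k)
        rw [← h4]
        linear_combination e k * X ^ (s - (k : ℕ)) * X ^ (k : ℕ) * h3
      rw [Finset.sum_congr rfl fun k _ => h2 k, ← Finset.mul_sum, h1, mul_zero])
    apply he0
    funext k
    have h5 := congrFun this k
    simp only [Pi.zero_apply, mul_eq_zero] at h5
    rcases h5 with (h5 | h5) | h5
    · exact h5
    · exact absurd h5 (pow_ne_zero _ hF0)
    · exact absurd h5 (pow_ne_zero _ X_ne_zero)
  have hv : ∀ k : Fin s, (X - C x0) ^ (t - (s - 1)) ∣ (Q.mulVec u) k := by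
    intro k
    have h1 : (Q.mulVec u) k = F ^ (k : ℕ) * derivative^[k] Φ := by
      simp only [Matrix.mulVec, dotProduct]
      rw [hΦ, iterate_derivative_sum, Finset.mul_sum]
      refine Finset.sum_congr rfl fun j _ => ?_
      rw [red_spec F (r j) (h j) (u j) (hu j) k, mul_comm]
    rw [h1]
    refine Dvd.dvd.mul_left ?_ _
    refine (pow_dvd_pow _ ?_).trans (pow_sub_dvd_iterate_derivative_of_pow_dvd (k : ℕ) hdvd)
    have := k.2; omega
  have hdvd2 : (X - C x0) ^ (t - (s - 1)) ∣ Q.det := by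
    have h1 : Q.adjugate.mulVec (Q.mulVec u) = Q.det • u := by
      rw [Matrix.mulVec_mulVec, Matrix.adjugate_mul, Matrix.smul_mulVec, Matrix.one_mulVec]
    have h2 : (X - C x0) ^ (t - (s - 1)) ∣ Q.det * u ⟨0, hs⟩ := by
      have h3 := congrFun h1 ⟨0, hs⟩
      simp only [Pi.smul_apply, smul_eq_mul] at h3
      rw [← h3]
      simp only [Matrix.mulVec, dotProduct]
      exact Finset.dvd_sum fun k _ => Dvd.dvd.mul_left (hv k) _
    refine IsCoprime.dvd_of_dvd_mul_right ?_ h2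
    refine IsCoprime.pow_left ?_
    rw [(irreducible_X_sub_C x0).coprime_iff_not_dvd, dvd_iff_isRoot]
    exact hu0 _
  have h6 := natDegree_le_of_dvd hdvd2 hdet
  rw [natDegree_pow, natDegree_X_sub_C, mul_one] at h6
  omega

end KeyDiv

/-- Key step of the induction: if the products
`x^a f_1^{b_1 t} ⋯ f_{n-1}^{b_{n-1} t}` (`a < A`, `b_i < B_i`) are linearly
independent over `F_p` of degree `< p`, `Φ = Σ_b H_b f_1^{b_1 t} ⋯ f_{n-1}^{b_{n-1} t} ≠ 0`
with `deg H_b < A`, and `f_n^t ∣ Φ`, then `t ≤ A 𝔅 + 𝓜_{n-1} 𝔅²/2 + 𝔅 − 1`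
where `𝔅 = B_1 ⋯ B_{n-1}`. -/
theorem key_divisibility_bound (p n : ℕ) [Fact p.Prime] (hn : 1 ≤ n)
    (f : Fin n → Polynomial (ZMod p)) (m : Fin n → ℕ)
    (hdeg : ∀ i, (f i).natDegree = m i) (hadm : AdmissibleSet f)
    (t A : ℕ) (B : Fin (n - 1) → ℕ) (ht : 0 < t) (hA : 0 < A) (hB : ∀ i, 0 < B i)
    (hind : LinearIndependent (ZMod p)
      (fun ab : Fin A × (∀ i : Fin (n - 1), Fin (B i)) =>
        (X : Polynomial (ZMod p)) ^ (ab.1 : ℕ) *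
          ∏ i, (f (Fin.castLE (Nat.sub_le n 1) i)) ^ ((ab.2 i : ℕ) * t)))
    (hdegsmall : ∀ (a : Fin A) (b : ∀ i : Fin (n - 1), Fin (B i)),
      ((X : Polynomial (ZMod p)) ^ (a : ℕ) *
        ∏ i, (f (Fin.castLE (Nat.sub_le n 1) i)) ^ ((b i : ℕ) * t)).natDegree < p)
    (H : (∀ i : Fin (n - 1), Fin (B i)) → Polynomial (ZMod p))
    (hH : ∀ b, (H b).degree < (A : ℕ))
    (Φ : Polynomial (ZMod p))
    (hΦ : Φ = ∑ b : ∀ i : Fin (n - 1), Fin (B i),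
      H b * ∏ i, (f (Fin.castLE (Nat.sub_le n 1) i)) ^ ((b i : ℕ) * t))
    (hΦ0 : Φ ≠ 0)
    (hdvd : (f ⟨n - 1, by omega⟩) ^ t ∣ Φ) :
    (t : ℝ) ≤ (A : ℝ) * (∏ i, (B i : ℝ)) +
      (∑ i : Fin (n - 1), (m (Fin.castLE (Nat.sub_le n 1) i) : ℝ)) * (∏ i, (B i : ℝ)) ^ 2 / 2 +
      (∏ i, (B i : ℝ)) - 1 := by
  classical
  obtain ⟨x, hx1, hx2, hx3⟩ := hadm
  set l : Fin n := ⟨n - 1, by omega⟩ with hl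
  set f' : Fin (n - 1) → (ZMod p)[X] := fun i => f (Fin.castLE (Nat.sub_le n 1) i) with hf'
  have hne : ∀ i : Fin (n - 1), Fin.castLE (Nat.sub_le n 1) i ≠ l := by
    intro i h
    have := congrArg Fin.val h
    have h2 := i.2
    simp [hl] at this
    omega
  have hf'x : ∀ i, (f' i).eval (x l) ≠ 0 := fun i => hx2 l _ (hne i)
  have hf'0 : ∀ i, f' i ≠ 0 := fun i h => hf'x i (by simp [h])
  set U : (∀ i : Fin (n - 1), Fin (B i)) → (ZMod p)[X] :=
    fun b => ∏ i, f' i ^ ((b i : ℕ) * t) with hU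
  have hU0 : ∀ b, U b ≠ 0 := fun b => Finset.prod_ne_zero_iff.2 fun i _ => pow_ne_zero _ (hf'0 i)
  let J := {b : ∀ i : Fin (n - 1), Fin (B i) // H b ≠ 0}
  set s := Fintype.card J with hs
  let ε : Fin s ≃ J := (Fintype.equivFin J).symm
  have hsub : ∀ G : (∀ i : Fin (n - 1), Fin (B i)) → (ZMod p)[X], (∀ b, H b = 0 → G b = 0) →
      ∑ b, G b = ∑ b : J, G b.1 := by
    intro G hG
    rw [← Finset.sum_filter_of_ne (p := fun b => H b ≠ 0)
      (fun b _ h h0 => h (hG b h0))]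
    exact Finset.sum_subtype _ (by simp) G
  have hΦJ : Φ = ∑ j : Fin s, H (ε j).1 * U (ε j).1 := by
    rw [Equiv.sum_comp ε (fun b : J => H b.1 * U b.1), hΦ]
    exact hsub (fun b => H b * U b) fun b hb => by simp [hb]
  have hs0 : 0 < s := by
    rcases Nat.eq_zero_or_pos s with h0 | h0
    · exfalso
      apply hΦ0
      have : IsEmpty (Fin s) := by rw [h0]; infer_instance
      rw [hΦJ, Finset.univ_eq_empty, Finset.sum_empty]
    · exact h0
  have hHd : ∀ b, (H b).natDegree ≤ A - 1 := by
    intro b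
    by_cases h0 : H b = 0
    · simp [h0]
    · have := (natDegree_lt_iff_degree_lt h0).2 (hH b)
      omega
  have hlin : LinearIndependent (ZMod p) fun b : J => H b.1 * U b.1 := by
    rw [Fintype.linearIndependent_iff] at hind ⊢
    intro c hc b
    have key := hind (fun ab => (if hb : H ab.2 ≠ 0 then c ⟨ab.2, hb⟩ else 0) * (H ab.2).coeff ab.1) (by
      rw [Fintype.sum_prod_type, Finset.sum_comm]
      refine Eq.trans ?_ hc
      rw [hsub _ (fun b hb => by simp [hb])]
      refine Finset.sum_congr rfl fun b _ => ?_
      have hb : H b.1 = ∑ a : Fin A, C ((H b.1).coeff a) * X ^ (a : ℕ) := by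
        rw [Fin.sum_univ_eq_sum_range (fun a => C ((H b.1).coeff a) * X ^ a) A]
        exact as_sum_range_C_mul_X_pow' _ (by have := hHd b.1; omega)
      conv_rhs => rw [hb]
      rw [Finset.sum_mul, Finset.smul_sum]
      refine Finset.sum_congr rfl fun a _ => ?_
      simp only [ne_eq, b.2, not_false_eq_true, dite_true, smul_eq_C_mul, C_mul]
      ring)
    have h1 := key (⟨(H b.1).natDegree, by have := hHd b.1; omega⟩, b.1)
    simp only [ne_eq, b.2, not_false_eq_true, dite_true, mul_eq_zero, coeff_natDegree, leadingCoeff_eq_zero, or_false] at h1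
    exact h1
  choose r hr1 hr2 using fun b : ∀ i : Fin (n - 1), Fin (B i) =>
    KeyDiv.exists_logderiv Finset.univ f' (fun i => (b i : ℕ) * t)
  have hcore := KeyDiv.core p s hs0 (∏ i, f' i) Φ (fun j => H (ε j).1) (fun j => U (ε j).1)
    (fun j => r (ε j).1) (∑ i, (f' i).natDegree) (A - 1) t (x l)
    (Finset.prod_ne_zero_iff.2 fun i _ => hf'0 i) (natDegree_prod_le _ _)
    (fun j => hr1 _) (fun j => hHd _) (fun j => hr2 _)
    (by
      intro j
      simp only [hU, eval_prod, eval_pow]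
      exact Finset.prod_ne_zero_iff.2 fun i _ => pow_ne_zero _ (hf'x i))
    (hlin.comp ε ε.injective)
    (by
      intro j
      have hb := (ε j).2
      have h1 := hdegsmall ⟨(H (ε j).1).natDegree, by have := hHd (ε j).1; omega⟩ (ε j).1
      change (X ^ (H (ε j).1).natDegree * U (ε j).1).natDegree < p at h1
      rw [natDegree_mul (pow_ne_zero _ X_ne_zero) (hU0 _), natDegree_X_pow] at h1
      rw [natDegree_mul hb (hU0 _)]
      exact h1)
    hΦJ
    ((pow_dvd_pow_of_dvd (dvd_iff_isRoot.2 (hx1 l)) t).trans hdvd)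
  have hsB : s ≤ ∏ i, B i := by
    have h1 : s ≤ Fintype.card (∀ i : Fin (n - 1), Fin (B i)) := Fintype.card_subtype_le _
    simpa using h1
  have hM : (∑ i : Fin (n - 1), (m (Fin.castLE (Nat.sub_le n 1) i) : ℝ))
      = ((∑ i, (f' i).natDegree : ℕ) : ℝ) := by
    push_cast
    exact Finset.sum_congr rfl fun i _ => by rw [← hdeg]
  have hPB : (∏ i, (B i : ℝ)) = ((∏ i, B i : ℕ) : ℝ) := by push_cast; rfl
  rw [hM, hPB]
  generalize (∏ i, B i) = BB at *
  generalize (∑ i, (f' i).natDegree) = M at *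
  have hsum : (∑ k : Fin s, ((A - 1) + (k : ℕ) * M)) = s * (A - 1) + (∑ k ∈ Finset.range s, k) * M := by
    rw [Finset.sum_add_distrib, ← Finset.sum_mul, Fin.sum_univ_eq_sum_range (fun k => k) s]
    simp
  rw [hsum] at hcore
  have hgauss : (∑ k ∈ Finset.range s, k) * 2 = s * (s - 1) := Finset.sum_range_id_mul_two s
  generalize (∑ k ∈ Finset.range s, k) = G at *
  have hG : G * 2 ≤ BB * BB := by
    rw [hgauss]; exact Nat.mul_le_mul hsB ((Nat.sub_le _ _).trans hsB)
  have h1 : s * (A - 1) ≤ BB * A := Nat.mul_le_mul hsB (Nat.sub_le _ _)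
  have h2 : G * 2 * M ≤ BB * BB * M := Nat.mul_le_mul_right _ hG
  have h3 : t + 1 ≤ BB + BB * A + G * M := by omega
  have h3' : (t : ℝ) + 1 ≤ BB + BB * A + G * M := by exact_mod_cast h3
  have h2' : (G : ℝ) * 2 * M ≤ BB * BB * M := by exact_mod_cast h2
  nlinarith
end

section
/- Let p be a prime and let f_1(x), …, f_{n−1}(x) ∈ F_p[x]. Let t, A, B_1, …, B_{n−1} be positive integers, set 𝔅 = B_1⋯B_{n−1}, and for each multi-index b = (b_1, …, b_{n−1}) with 0 ≤ b_i < B_i let Q_b(x) = H_b(x) f_1(x)^{b_1 t} ⋯ f_{n−1}(x)^{b_{n−1} t} with H_b ∈ F_p[x]. Assume b_i t ≥ 𝔅 − 1 whenever b_i ≥ 1 (so the exponents below are nonnegative). Then the Wronskian determinant W(x) of the family (Q_b)_b — the 𝔅 × 𝔅 determinant whose rows are the derivatives of order 0, 1, …, 𝔅 − 1 of the Q_b — is divisible by R(x) = ∏_b f_1(x)^{max(b_1 t − 𝔅 + 1, 0)} ⋯ f_{n−1}(x)^{max(b_{n−1} t − 𝔅 + 1, 0)}. -/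
open Polynomial

theorem aux_prod_deriv {R ι : Type*} [CommRing R] (f : ι → Polynomial R) (a : ι → ℕ)
    (s : Finset ι) :
    (∏ i ∈ s, f i ^ (a i - 1)) ∣ derivative (∏ i ∈ s, f i ^ a i) := by
  classical
  induction s using Finset.induction_on with
  | empty => simp
  | insert j s hj ih =>
    rw [Finset.prod_insert hj, Finset.prod_insert hj, derivative_mul]
    refine dvd_add (mul_dvd_mul ?_ ?_) (mul_dvd_mul ?_ ih)
    · rw [derivative_pow]
      exact Dvd.intro_left (C (a j : R)) rfl |>.mul_right _
    · exact Finset.prod_dvd_prod_of_dvd _ _ fun i _ => pow_dvd_pow _ (Nat.sub_le _ _)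
    · exact pow_dvd_pow _ (Nat.sub_le _ _)

theorem aux_iter {R ι : Type*} [CommRing R] [Fintype ι] (f : ι → Polynomial R) (a : ι → ℕ)
    (H : Polynomial R) (m : ℕ) :
    (∏ i, f i ^ (a i - m)) ∣ derivative^[m] (H * ∏ i, f i ^ a i) := by
  induction m with
  | zero => simp
  | succ m ih =>
    rw [Function.iterate_succ_apply']
    obtain ⟨G, hG⟩ := ih
    rw [hG, derivative_mul]
    have h := aux_prod_deriv f (fun i => a i - m) Finset.univ
    simp only [Nat.sub_sub] at h
    refine dvd_add (h.mul_right _) (Dvd.dvd.mul_right ?_ _)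
    exact Finset.prod_dvd_prod_of_dvd _ _ fun i _ => pow_dvd_pow _ (by omega)

/-- The Wronskian `W` of the family `Q_b = H_b f_1^{b_1 t} ⋯ f_k^{b_k t}`
(multi-indices `b` with `b_i < B_i`, `𝔅 = B_1 ⋯ B_k` columns, rows given by the
derivatives of orders `0, …, 𝔅 − 1`) is divisible by
`R = ∏_b ∏_i f_i^{max(b_i t − 𝔅 + 1, 0)}`. -/
theorem wronskian_divisibility (p k : ℕ) [Fact p.Prime]
    (f : Fin k → Polynomial (ZMod p))
    (t A : ℕ) (B : Fin k → ℕ) (ht : 0 < t) (hA : 0 < A) (hB : ∀ i, 0 < B i)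
    (H : (∀ i : Fin k, Fin (B i)) → Polynomial (ZMod p))
    (𝔅 : ℕ) (h𝔅 : 𝔅 = ∏ i, B i)
    (hexp : ∀ (b : ∀ i : Fin k, Fin (B i)) (i : Fin k), 1 ≤ (b i : ℕ) →
      𝔅 - 1 ≤ (b i : ℕ) * t)
    (e : (∀ i : Fin k, Fin (B i)) ≃ Fin 𝔅) :
    (∏ b : ∀ i : Fin k, Fin (B i), ∏ i, f i ^ ((b i : ℕ) * t - (𝔅 - 1))) ∣
      Matrix.det (Matrix.of fun (r c : Fin 𝔅) =>
        derivative^[(r : ℕ)] (H (e.symm c) * ∏ i, f i ^ (((e.symm c) i : ℕ) * t))) := by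
  have key : ∀ r c : Fin 𝔅, ∃ G : Polynomial (ZMod p),
      derivative^[(r : ℕ)] (H (e.symm c) * ∏ i, f i ^ (((e.symm c) i : ℕ) * t)) =
        (∏ i, f i ^ (((e.symm c) i : ℕ) * t - (𝔅 - 1))) * G := fun r c =>
    (Finset.prod_dvd_prod_of_dvd _ _ fun i _ =>
      pow_dvd_pow (f i) (by have := r.2; omega)).trans
      (aux_iter f (fun i => ((e.symm c) i : ℕ) * t) (H (e.symm c)) (r : ℕ))
  choose G hG using key
  simp only [hG]
  have h := Matrix.det_mul_row
    (fun c : Fin 𝔅 => ∏ i, f i ^ (((e.symm c) i : ℕ) * t - (𝔅 - 1))) (Matrix.of G)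
  simp only [Matrix.of_apply] at h
  rw [h, Equiv.prod_comp e.symm (fun b => ∏ i, f i ^ ((b i : ℕ) * t - (𝔅 - 1)))]
  exact dvd_mul_right _ _
end
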